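/- (Strict dominance under independent opponent randomization, RAE₂) Fix a player i and two pure strategies s_i, s_i' ∈ S i, and let τ : S i → S i be the transposition exchanging s_i and s_i'. Suppose that for every tuple T assigning to each pure strategy k ∈ S i a profile T(k) of opposing pure strategies, one has q_i(s_i, T) > q_i(s_i', T ∘ τ). Then for every mixed strategy profile σ, Q_i(s_i, σ) > Q_i(s_i', σ); consequently s_i' never maximizes Q_i(·, σ) over S i, i.e., a strictly dominated pure strategy is never an RAE₂ best response to any mixed strategy profile. -/

import Mathlib

open MeasureTheory

noncomputable section

/-- Insert pure strategy `si` for player `i` into a profile `t` of pure strategies of the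
other players, obtaining a full pure-strategy profile. -/
def insertStrat {ι : Type*} [DecidableEq ι] {S : ι → Type*} (i : ι) (si : S i)
    (t : ∀ j : {j : ι // j ≠ i}, S j.1) : ∀ j, S j :=
  fun j => if h : j = i then h.symm ▸ si else t ⟨j, h⟩

/-- `σ` is a mixed strategy profile: each `σ j` is nonnegative and sums to one. -/
def IsMixedProfile {ι : Type*} {S : ι → Type*} [∀ j, Fintype (S j)]
    (σ : ∀ j, S j → ℝ) : Prop :=
  (∀ j s, 0 ≤ σ j s) ∧ ∀ j, ∑ s, σ j s = 1

/-- In the RAE₂ (independent opponent randomization) framework, `q_i(s_i, T)` is the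
probability that against the tuple `T` — assigning to each pure strategy `k ∈ S i` its own
opposing profile `T k` — the payoff of `s_i` (against `T s_i`) is the largest. -/
def rae2Prob {ι : Type*} [DecidableEq ι] {S : ι → Type*}
    {Ω : Type*} [MeasurableSpace Ω] (μ : Measure Ω)
    (U : ∀ i : ι, (∀ j, S j) → Ω → ℝ) (i : ι) (si : S i)
    (T : S i → ∀ j : {j : ι // j ≠ i}, S j.1) : ℝ :=
  (μ {ω | ∀ k : S i, U i (insertStrat i k (T k)) ω ≤ U i (insertStrat i si (T si)) ω}).toReal

/-- The RAE₂ mixed risk-averse probability `Q_i(s_i, σ)`. -/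
def mixedRae2Prob {ι : Type*} [Fintype ι] [DecidableEq ι] {S : ι → Type*}
    [∀ j, Fintype (S j)] [∀ j, DecidableEq (S j)]
    {Ω : Type*} [MeasurableSpace Ω] (μ : Measure Ω)
    (U : ∀ i : ι, (∀ j, S j) → Ω → ℝ) (i : ι) (si : S i) (σ : ∀ j, S j → ℝ) : ℝ :=
  ∑ T : S i → ∀ j : {j : ι // j ≠ i}, S j.1,
    (∏ k : S i, ∏ j : {j : ι // j ≠ i}, σ j.1 (T k j)) * rae2Prob μ U i si T

/-!
The weight `∏ k, σ(T k)` of a tuple `T` is unchanged when its entries are permuted. The sum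
defining `Q_i(s_i', σ)` can therefore be reindexed by `T ↦ T ∘ τ` and compared with `Q_i(s_i, σ)`
term by term. The comparison is strict because some tuple has positive weight.
-/

section PermutedWeights

variable {R κ α : Type*} [CommSemiring R] [Fintype κ] [DecidableEq κ] [Fintype α]

theorem sum_prod_mul_comp_perm (p : α → R) (f : (κ → α) → R) (e : Equiv.Perm κ) :
    ∑ T : κ → α, (∏ k, p (T k)) * f (T ∘ e) = ∑ T : κ → α, (∏ k, p (T k)) * f T := by
  refine Fintype.sum_equiv (e.symm.arrowCongr (Equiv.refl α)) _ _ fun T => ?_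
  have weight_comp : ∏ k, p (T (e k)) = ∏ k, p (T k) := Equiv.prod_comp e fun k => p (T k)
  exact congrArg (· * f (T ∘ e)) weight_comp.symm

theorem sum_prod_mul_lt_sum_prod_mul_of_comp_perm_lt [PartialOrder R] [IsStrictOrderedRing R]
    {p : α → R} (hp : ∀ a, 0 ≤ p a) (hp_pos : ∃ a, 0 < p a) (e : Equiv.Perm κ)
    {f g : (κ → α) → R} (hfg : ∀ T, f (T ∘ e) < g T) :
    ∑ T : κ → α, (∏ k, p (T k)) * f T < ∑ T : κ → α, (∏ k, p (T k)) * g T := by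
  obtain ⟨a, ha⟩ := hp_pos
  have weight_nonneg (T : κ → α) : 0 ≤ ∏ k, p (T k) := Finset.prod_nonneg fun k _ => hp (T k)
  have weight_const_pos : 0 < ∏ k, p (Function.const κ a k) := Finset.prod_pos fun _ _ => ha
  calc ∑ T : κ → α, (∏ k, p (T k)) * f T
      = ∑ T : κ → α, (∏ k, p (T k)) * f (T ∘ e) := (sum_prod_mul_comp_perm p f e).symm
    _ < ∑ T : κ → α, (∏ k, p (T k)) * g T :=
      Finset.sum_lt_sum (fun T _ => mul_le_mul_of_nonneg_left (hfg T).le (weight_nonneg T))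
        ⟨Function.const κ a, Finset.mem_univ _, mul_lt_mul_of_pos_left (hfg _) weight_const_pos⟩

end PermutedWeights

theorem IsMixedProfile.exists_pos {ι : Type*} {S : ι → Type*} [∀ j, Fintype (S j)]
    {σ : ∀ j, S j → ℝ} (hσ : IsMixedProfile σ) (j : ι) : ∃ s, 0 < σ j s := by
  by_contra! h
  exact (Finset.sum_nonpos fun s _ => h s).not_gt ((hσ.2 j).symm ▸ one_pos)

section Opponents

variable {ι : Type*} [Fintype ι] [DecidableEq ι] {S : ι → Type*}

/-- The probability `σ(s_{-i})` that the opponents of player `i`, mixing independently according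
to `σ`, play the pure profile `t`. -/
def opponentWeight (σ : ∀ j, S j → ℝ) (i : ι) (t : ∀ j : {j : ι // j ≠ i}, S j.1) : ℝ :=
  ∏ j : {j : ι // j ≠ i}, σ j.1 (t j)

namespace IsMixedProfile

variable [∀ j, Fintype (S j)] {σ : ∀ j, S j → ℝ}

theorem opponentWeight_nonneg (hσ : IsMixedProfile σ) (i : ι)
    (t : ∀ j : {j : ι // j ≠ i}, S j.1) : 0 ≤ opponentWeight σ i t :=
  Finset.prod_nonneg fun j _ => hσ.1 j.1 (t j)

theorem exists_opponentWeight_pos (hσ : IsMixedProfile σ) (i : ι) :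
    ∃ t, 0 < opponentWeight σ i t := by
  choose s hs using hσ.exists_pos
  exact ⟨fun j => s j.1, Finset.prod_pos fun j _ => hs j.1⟩

end IsMixedProfile

theorem strictly_dominated_not_best_response_rae2_general
    [∀ j, Fintype (S j)] [∀ j, DecidableEq (S j)]
    {Ω : Type*} [MeasurableSpace Ω] (μ : Measure Ω) (U : ι → (∀ j, S j) → Ω → ℝ)
    (i : ι) (si si' : S i) (e : Equiv.Perm (S i))
    (hdom : ∀ T : S i → ∀ j : {j : ι // j ≠ i}, S j.1,
      rae2Prob μ U i si' (T ∘ e) < rae2Prob μ U i si T)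
    (σ : ∀ j, S j → ℝ) (hσ : IsMixedProfile σ) :
    mixedRae2Prob μ U i si' σ < mixedRae2Prob μ U i si σ ∧
      ¬ (∀ k : S i, mixedRae2Prob μ U i k σ ≤ mixedRae2Prob μ U i si' σ) := by
  have mixed_lt : mixedRae2Prob μ U i si' σ < mixedRae2Prob μ U i si σ :=
    sum_prod_mul_lt_sum_prod_mul_of_comp_perm_lt
      (hσ.opponentWeight_nonneg i) (hσ.exists_opponentWeight_pos i) e hdom
  exact ⟨mixed_lt, fun si'_max => (si'_max si).not_gt mixed_lt⟩

end Opponents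

/-- **Strict dominance under independent opponent randomization (RAE₂).** If
`q_i(s_i, T) > q_i(s_i', T ∘ τ)` for every tuple `T`, where `τ` is the transposition
exchanging `s_i` and `s_i'`, then `Q_i(s_i, σ) > Q_i(s_i', σ)` for every mixed strategy
profile `σ`; consequently `s_i'` never maximizes `Q_i(·, σ)`. -/
theorem strictly_dominated_not_best_response_rae2
    {ι : Type*} [Fintype ι] [DecidableEq ι] [Nonempty ι]
    {S : ι → Type*} [∀ j, Fintype (S j)] [∀ j, DecidableEq (S j)] [∀ j, Nonempty (S j)]
    {Ω : Type*} [MeasurableSpace Ω] (μ : Measure Ω) [IsProbabilityMeasure μ]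
    (U : ∀ i : ι, (∀ j, S j) → Ω → ℝ)
    (hmeas : ∀ i s, Measurable (U i s))
    (i : ι) (si si' : S i)
    (hdom : ∀ T : S i → ∀ j : {j : ι // j ≠ i}, S j.1,
      rae2Prob μ U i si' (fun k => T (Equiv.swap si si' k)) < rae2Prob μ U i si T) :
    ∀ σ : ∀ j, S j → ℝ, IsMixedProfile σ →
      mixedRae2Prob μ U i si' σ < mixedRae2Prob μ U i si σ ∧
      ¬ (∀ k : S i, mixedRae2Prob μ U i k σ ≤ mixedRae2Prob μ U i si' σ) :=
  strictly_dominated_not_best_response_rae2_general μ U i si si' (Equiv.swap si si') hdom
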